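/- For every natural number k ≥ 2, f(2^{2^k − 1}, 3) ≥ 2^k. -/

import Mathlib

/-- The continuant of a finite sequence of positive integers. -/
def continuant : List ℕ → ℕ
  | [] => 1
  | [a] => a
  | a :: b :: t => a * continuant (b :: t) + continuant t

/-- `f d N` is the number of finite sequences of positive integers, all entries `< N`,
whose continuant equals `d`. -/
noncomputable def f (d N : ℕ) : ℕ :=
  Set.ncard {l : List ℕ | (∀ x ∈ l, 0 < x ∧ x < N) ∧ continuant l = d}

/-- `lam` is the largest real root of the real function `p`. -/
def IsGreatestRoot (p : ℝ → ℝ) (lam : ℝ) : Prop :=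
  p lam = 0 ∧ ∀ x : ℝ, p x = 0 → x ≤ lam

/-!
The continuant of `a₁, …, aₙ` is the top-left entry of `∏ [[aᵢ, 1], [1, 0]]`. If `(x, y)` is the
top row of the matrix of `u` and `M` is the matrix of `v`, then the continuant of `u, v, uᵒᵖ`, where
`uᵒᵖ` is `u` reversed, is the quadratic form `(x, y) M (x, y)ᵀ`. For `v = a + 1, c, 1, a` and its
reversal this form is `(c + 1) ((a + 1) x + y)²`, a multiple of the square of
`⟨u, a + 1⟩ = (a + 1) x + y`. So each word `w` with `⟨a + 1, w, a + 1⟩ = d` folds in two ways to a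
word `w'` with `⟨a + 1, w', a + 1⟩ = (c + 1) d²`.

Taking `a = c = 1` and starting from `⟨2, 1, 2⟩ = 2 ^ 3`, each folding step passes from
`2 ^ (2 ^ k - 1)` to `2 ^ (2 ^ (k + 1) - 1)` and doubles the number of such words. Finally
`⟨1, a, l⟩ = ⟨a + 1, l⟩`, so each outer letter may be split, which multiplies the count by four.
-/

/-- The matrix `∏ [[aᵢ, 1], [1, 0]]` of a word `a₁, …, aₙ`, whose top-left entry is the
continuant. -/
def continuantMatrix (l : List ℕ) : Matrix (Fin 2) (Fin 2) ℕ :=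
  (l.map fun a => !![a, 1; 1, 0]).prod

section continuantMatrix

open Matrix

lemma continuantMatrix_cons (a : ℕ) (l : List ℕ) :
    continuantMatrix (a :: l) = !![a, 1; 1, 0] * continuantMatrix l :=
  List.prod_cons

lemma continuantMatrix_append (u v : List ℕ) :
    continuantMatrix (u ++ v) = continuantMatrix u * continuantMatrix v := by
  simp only [continuantMatrix, List.map_append, List.prod_append]

lemma continuantMatrix_reverse (l : List ℕ) :
    continuantMatrix l.reverse = (continuantMatrix l)ᵀ := by
  have transpose_letter (a : ℕ) : !![a, 1; 1, 0]ᵀ = !![a, 1; 1, 0] := by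
    ext i j
    fin_cases i <;> fin_cases j <;> rfl
  simp only [continuantMatrix, transpose_list_prod, List.map_map, List.map_reverse,
    Function.comp_def, transpose_letter]

lemma continuantMatrix_zero_zero (l : List ℕ) : continuantMatrix l 0 0 = continuant l := by
  fun_induction continuant l with
  | case1 => rfl
  | case2 a => simp [continuantMatrix]
  | case3 a b t ih₁ ih₂ =>
    rw [← ih₁, ← ih₂]
    simp [continuantMatrix_cons, mul_apply, vecMul, dotProduct, Fin.sum_univ_two]

lemma continuant_append_singleton (u : List ℕ) (a : ℕ) :
    continuant (u ++ [a]) = a * continuantMatrix u 0 0 + continuantMatrix u 0 1 := by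
  rw [← continuantMatrix_zero_zero, continuantMatrix_append]
  simp [continuantMatrix, mul_apply, Fin.sum_univ_two, mul_comm]

lemma continuant_append_append_reverse (u v : List ℕ) :
    continuant (u ++ v ++ u.reverse) =
      continuantMatrix v 0 0 * continuantMatrix u 0 0 ^ 2 +
        (continuantMatrix v 0 1 + continuantMatrix v 1 0) *
          (continuantMatrix u 0 0 * continuantMatrix u 0 1) +
        continuantMatrix v 1 1 * continuantMatrix u 0 1 ^ 2 := by
  rw [← continuantMatrix_zero_zero, continuantMatrix_append, continuantMatrix_append,
    continuantMatrix_reverse]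
  simp only [mul_apply, transpose_apply, Fin.sum_univ_two]
  ring

end continuantMatrix

lemma continuant_reverse (l : List ℕ) : continuant l.reverse = continuant l := by
  rw [← continuantMatrix_zero_zero, ← continuantMatrix_zero_zero, continuantMatrix_reverse,
    Matrix.transpose_apply]

lemma continuant_one_cons_cons (a : ℕ) (l : List ℕ) :
    continuant (1 :: a :: l) = continuant ((a + 1) :: l) := by
  cases l <;> simp only [continuant] <;> ring

lemma continuant_pos {l : List ℕ} (hl : ∀ x ∈ l, 0 < x) : 0 < continuant l := by
  fun_induction continuant l with
  | case1 => exact one_pos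
  | case2 a => exact hl a (List.mem_singleton_self a)
  | case3 a b t _ ih =>
    simp only [List.forall_mem_cons] at hl
    exact Nat.add_pos_right _ (ih hl.2.2)

lemma length_le_continuant {l : List ℕ} (hl : ∀ x ∈ l, 0 < x) : l.length ≤ continuant l := by
  fun_induction continuant l with
  | case1 => exact zero_le_one
  | case2 a => exact hl a (List.mem_singleton_self a)
  | case3 a b t ih _ =>
    obtain ⟨ha, hbt⟩ := List.forall_mem_cons.1 hl
    calc (a :: b :: t).length = (b :: t).length + 1 := rfl
      _ ≤ a * continuant (b :: t) + continuant t :=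
        add_le_add ((ih hbt).trans (Nat.le_mul_of_pos_left _ ha))
          (continuant_pos (List.forall_mem_cons.1 hbt).2)

lemma finite_setOf_forall_mem_lt_and_length_le (N n : ℕ) :
    {l : List ℕ | (∀ x ∈ l, x < N) ∧ l.length ≤ n}.Finite := by
  refine ((List.finite_length_le (Fin N) n).image (List.map Fin.val)).subset ?_
  rintro l ⟨hl, hlen⟩
  exact ⟨l.pmap Fin.mk hl, by simpa using hlen, by simp [List.map_pmap]⟩

/-- The set of words counted by `f d N`. -/
def continuantWords (d N : ℕ) : Set (List ℕ) :=
  {l | (∀ x ∈ l, 0 < x ∧ x < N) ∧ continuant l = d}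

lemma finite_continuantWords (d N : ℕ) : (continuantWords d N).Finite := by
  refine (finite_setOf_forall_mem_lt_and_length_le N d).subset ?_
  rintro l ⟨hl, rfl⟩
  exact ⟨fun x hx => (hl x hx).2, length_le_continuant fun x hx => (hl x hx).1⟩

/-- The set of words `w` for which `a + 1, w, a + 1` is a word counted by `f d N`. The outer letters
are kept apart because folding preserves them and they can be split as `1, a` and `a, 1`. -/
def continuantCores (a d N : ℕ) : Set (List ℕ) :=
  {w | (a + 1) :: w ++ [a + 1] ∈ continuantWords d N}

lemma finite_continuantCores (a d N : ℕ) : (continuantCores a d N).Finite := by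
  refine (finite_continuantWords d N).preimage (Function.Injective.injOn fun v w h => ?_)
  exact List.append_cancel_right (List.cons_injective h)

/-- The word inserted in the middle when folding, in one of its two orientations. -/
def foldWord (a c : ℕ) : Bool → List ℕ
  | true => [a + 1, c, 1, a]
  | false => [a, 1, c, a + 1]

lemma continuantMatrix_foldWord_true (a c : ℕ) :
    continuantMatrix (foldWord a c true) =
      !![(c + 1) * (a + 1) ^ 2, (c + 1) * (a + 1) + 1; c * (a + 1) + a, c + 1] := by
  simp only [foldWord, continuantMatrix, List.map_cons, List.map_nil, List.prod_cons,
    List.prod_nil, mul_one, Matrix.mul_fin_two]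
  ring_nf

lemma continuantMatrix_foldWord_false (a c : ℕ) :
    continuantMatrix (foldWord a c false) = (continuantMatrix (foldWord a c true)).transpose :=
  continuantMatrix_reverse (foldWord a c true)

lemma continuant_append_foldWord_append_reverse (u : List ℕ) (a c : ℕ) (b : Bool) :
    continuant (u ++ foldWord a c b ++ u.reverse) = (c + 1) * continuant (u ++ [a + 1]) ^ 2 := by
  rw [continuant_append_append_reverse, continuant_append_singleton]
  cases b <;>
    simp only [continuantMatrix_foldWord_false, continuantMatrix_foldWord_true,
      Matrix.transpose_apply, Matrix.of_apply, Matrix.cons_val_zero, Matrix.cons_val_one] <;>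
    ring

lemma append_foldWord_append_reverse_injective (a c : ℕ) :
    Function.Injective fun p : List ℕ × Bool => p.1 ++ foldWord a c p.2 ++ p.1.reverse := by
  have length_foldWord (b : Bool) : (foldWord a c b).length = 4 := by cases b <;> rfl
  rintro ⟨v, b⟩ ⟨w, b'⟩ h
  have hlen : v.length = w.length := by
    have := congrArg List.length h
    simp only [List.length_append, List.length_reverse, length_foldWord] at this
    omega
  simp only [List.append_assoc] at h
  obtain ⟨rfl, htail⟩ := List.append_inj h hlen
  have hmid : foldWord a c b = foldWord a c b' := List.append_cancel_right htail
  cases b <;> cases b' <;> simp [foldWord] at hmid ⊢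

lemma append_foldWord_append_reverse_mem_continuantCores {a c d N : ℕ} {w : List ℕ} (ha : 0 < a)
    (hc : 0 < c) (hcN : c < N) (hw : w ∈ continuantCores a d N) (b : Bool) :
    w ++ foldWord a c b ++ w.reverse ∈ continuantCores a ((c + 1) * d ^ 2) N := by
  obtain ⟨hletters, rfl⟩ := hw
  refine ⟨?_, ?_⟩
  · have haN : a + 1 < N := (hletters (a + 1) List.mem_cons_self).2
    cases b <;> simp only [foldWord] <;> grind
  · rw [← continuant_append_foldWord_append_reverse _ a c b]
    simp only [List.cons_append, List.reverse_cons, List.append_assoc]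

lemma two_mul_ncard_continuantCores_le {a c N : ℕ} (ha : 0 < a) (hc : 0 < c) (hcN : c < N)
    (d : ℕ) :
    2 * (continuantCores a d N).ncard ≤ (continuantCores a ((c + 1) * d ^ 2) N).ncard := by
  calc 2 * (continuantCores a d N).ncard
      = (continuantCores a d N ×ˢ (Set.univ : Set Bool)).ncard := by
        rw [Set.ncard_prod, Set.ncard_univ, Nat.card_eq_fintype_card, Fintype.card_bool, mul_comm]
    _ ≤ (continuantCores a ((c + 1) * d ^ 2) N).ncard :=
        Set.ncard_le_ncard_of_injOn _
          (fun p hp => append_foldWord_append_reverse_mem_continuantCores ha hc hcN hp.1 p.2)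
          (append_foldWord_append_reverse_injective a c).injOn (finite_continuantCores _ _ _)

lemma two_pow_mul_ncard_continuantCores_le {a c N : ℕ} (ha : 0 < a) (hc : 0 < c) (hcN : c < N)
    {d : ℕ → ℕ} (hd : ∀ n, d (n + 1) = (c + 1) * d n ^ 2) (n : ℕ) :
    2 ^ n * (continuantCores a (d 0) N).ncard ≤ (continuantCores a (d n) N).ncard := by
  induction n with
  | zero => rw [pow_zero, one_mul]
  | succ n ih =>
    rw [pow_succ', mul_assoc, hd]
    exact (Nat.mul_le_mul_left 2 ih).trans (two_mul_ncard_continuantCores_le ha hc hcN _)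

/-- The two initial segments `a + 1` and `1, a`, which can be exchanged without changing the
continuant; their reversals are the corresponding final segments. -/
def endWord (a : ℕ) : Bool → List ℕ
  | true => [a + 1]
  | false => [1, a]

lemma continuant_endWord_append (a : ℕ) (b : Bool) (l : List ℕ) :
    continuant (endWord a b ++ l) = continuant ((a + 1) :: l) := by
  cases b
  · exact continuant_one_cons_cons a l
  · rfl

lemma continuant_append_reverse_endWord (l : List ℕ) (a : ℕ) (b : Bool) :
    continuant (l ++ (endWord a b).reverse) = continuant (l ++ [a + 1]) := by
  rw [← continuant_reverse, List.reverse_append, List.reverse_reverse, continuant_endWord_append,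
    ← continuant_reverse, List.reverse_cons, List.reverse_reverse]

lemma endWord_append_inj {a : ℕ} (ha : 0 < a) {b b' : Bool} {l l' : List ℕ} :
    endWord a b ++ l = endWord a b' ++ l' ↔ b = b' ∧ l = l' := by
  cases b <;> cases b' <;> simp [endWord] <;> omega

lemma append_reverse_endWord_inj {a : ℕ} (ha : 0 < a) {b b' : Bool} {l l' : List ℕ} :
    l ++ (endWord a b).reverse = l' ++ (endWord a b').reverse ↔ l = l' ∧ b = b' := by
  rw [← List.reverse_inj, List.reverse_append, List.reverse_append, List.reverse_reverse,
    List.reverse_reverse, endWord_append_inj ha, List.reverse_inj, and_comm]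

lemma endWord_append_append_reverse_mem_continuantWords {a d N : ℕ} {w : List ℕ} (ha : 0 < a)
    (hw : w ∈ continuantCores a d N) (b b' : Bool) :
    endWord a b ++ (w ++ (endWord a b').reverse) ∈ continuantWords d N := by
  obtain ⟨hletters, rfl⟩ := hw
  refine ⟨?_, ?_⟩
  · have haN : a + 1 < N := (hletters (a + 1) List.mem_cons_self).2
    cases b <;> cases b' <;> simp only [endWord] <;> grind
  · rw [continuant_endWord_append, ← List.cons_append, continuant_append_reverse_endWord]

lemma four_mul_ncard_continuantCores_le {a : ℕ} (ha : 0 < a) (d N : ℕ) :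
    4 * (continuantCores a d N).ncard ≤ f d N := by
  have hinj : Function.Injective fun p : List ℕ × Bool × Bool =>
      endWord a p.2.1 ++ (p.1 ++ (endWord a p.2.2).reverse) := by
    rintro ⟨v, b, b'⟩ ⟨w, c, c'⟩ h
    obtain ⟨rfl, htail⟩ := (endWord_append_inj ha).1 h
    obtain ⟨rfl, rfl⟩ := (append_reverse_endWord_inj ha).1 htail
    rfl
  calc 4 * (continuantCores a d N).ncard
      = (continuantCores a d N ×ˢ (Set.univ : Set (Bool × Bool))).ncard := by
        rw [Set.ncard_prod, Set.ncard_univ, Nat.card_eq_fintype_card, Fintype.card_prod,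
          Fintype.card_bool, mul_comm]
    _ ≤ (continuantWords d N).ncard :=
        Set.ncard_le_ncard_of_injOn _
          (fun p hp => endWord_append_append_reverse_mem_continuantWords ha hp.1 p.2.1 p.2.2)
          hinj.injOn (finite_continuantWords d N)

lemma pow_mersenne_succ {M : Type*} [Monoid M] (x : M) (n : ℕ) :
    x ^ mersenne (n + 1) = x * (x ^ mersenne n) ^ 2 := by
  rw [mersenne_succ, pow_succ', mul_comm 2, pow_mul]

theorem theorem5 (k : ℕ) (hk : 2 ≤ k) :
    2 ^ k ≤ f (2 ^ (2 ^ k - 1)) 3 := by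
  obtain ⟨n, rfl⟩ := Nat.exists_eq_add_of_le' hk
  let d (n : ℕ) : ℕ := 2 ^ mersenne (n + 2)
  have core_mem : [1] ∈ continuantCores 1 (d 0) 3 := ⟨by simp, rfl⟩
  have ncard_pos : 0 < (continuantCores 1 (d 0) 3).ncard :=
    (Set.ncard_pos (finite_continuantCores _ _ _)).2 ⟨_, core_mem⟩
  have hd (n : ℕ) : d (n + 1) = (1 + 1) * d n ^ 2 := pow_mersenne_succ 2 (n + 2)
  calc 2 ^ (n + 2) = 4 * 2 ^ n := by ring
    _ ≤ 4 * (2 ^ n * (continuantCores 1 (d 0) 3).ncard) := by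
      gcongr; exact Nat.le_mul_of_pos_right _ ncard_pos
    _ ≤ 4 * (continuantCores 1 (d n) 3).ncard := by
      gcongr
      exact two_pow_mul_ncard_continuantCores_le one_pos one_pos (by norm_num) hd n
    _ ≤ f (d n) 3 := four_mul_ncard_continuantCores_le one_pos _ _
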